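/- Let λ : ℤ₊ → ℝ satisfy (UB), let γ ≥ 0 and N ≥ 1, and write Δ_N = (0,1,…,N−1) ∈ W^N. Then the inhomogeneous Plancherel measures are consistent with the links of the inhomogeneous Gelfand–Tsetlin graph: for every y ∈ W^N, Σ_{x ∈ W^{N+1}} 𝔓_γ^{N+1}(Δ_{N+1}, x) · 𝔏_N^{N+1}(x, y) = 𝔓_γ^N(Δ_N, y), the series converging absolutely. -/

import Mathlib

open Complex MeasureTheory Finset
open scoped Real ComplexOrder

/-- ψ_x(w) = ∏_{k=0}^{x} λ(k)/(λ(k)−w). -/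
noncomputable def psiF (lam : ℕ → ℝ) (x : ℕ) (w : ℂ) : ℂ :=
  ∏ k ∈ Finset.range (x + 1), (lam k : ℂ) / ((lam k : ℂ) - w)

/-- p_x(w) = ∏_{k=0}^{x−1} (λ(k)−w)/λ(k). -/
noncomputable def pF (lam : ℕ → ℝ) (x : ℕ) (w : ℂ) : ℂ :=
  ∏ k ∈ Finset.range x, (((lam k : ℂ) - w) / (lam k : ℂ))

/-- e^{tL}(x,y) := −(1/λ(y))·(1/(2πi)) ∮_{|w|=R} ψ_y(w) p_x(w) e^{−tw} dw,
the contour being the counterclockwise circle of radius R centred at 0. -/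
noncomputable def eL (lam : ℕ → ℝ) (R t : ℝ) (x y : ℕ) : ℂ :=
  -(1 / (lam y : ℂ)) * ((2 * (Real.pi : ℂ) * Complex.I)⁻¹ *
    ∮ w in C(0, R), psiF lam y w * pF lam x w * Complex.exp (-(t : ℂ) * w))

/-- y ≺ x : interlacing, x_1 ≤ y_1 < x_2 ≤ y_2 < ⋯ ≤ y_N < x_{N+1}.
(Membership of (y,x) in W^{N,N+1} is exactly this condition.) -/
def Interlace {N : ℕ} (y : Fin N → ℕ) (x : Fin (N + 1) → ℕ) : Prop :=
  ∀ i : Fin N, x i.castSucc ≤ y i ∧ y i < x i.succ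

instance {N : ℕ} (y : Fin N → ℕ) (x : Fin (N + 1) → ℕ) : Decidable (Interlace y x) :=
  inferInstanceAs (Decidable (∀ i : Fin N, x i.castSucc ≤ y i ∧ y i < x i.succ))

/-- 𝔥_N, defined recursively: 𝔥_1 ≡ 1 and 𝔥_{N+1}(x) = Σ_{y ≺ x} ∏ λ(y_i)⁻¹ 𝔥_N(y)
(so 𝔥_1(x) = 1 since the empty interlacing condition is vacuous and the unique
y : Fin 0 → ℕ contributes the empty product). -/
noncomputable def hfun (lam : ℕ → ℝ) : (N : ℕ) → (Fin N → ℕ) → ℝ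
  | 0, _ => 1
  | (N + 1), x => ∑' y : { y : Fin N → ℕ // Interlace y x },
      (∏ i, (lam (y.1 i))⁻¹) * hfun lam N y.1

/-- 𝔓_t^N(x,y) = (𝔥_N(y)/𝔥_N(x)) det(e^{tL}(x_i,y_j))_{i,j=1}^N. -/
noncomputable def frakP (lam : ℕ → ℝ) (R t : ℝ) (N : ℕ) (x y : Fin N → ℕ) : ℂ :=
  ((hfun lam N y / hfun lam N x : ℝ) : ℂ) *
    (Matrix.of fun i j => eL lam R t (x i) (y j)).det

/-- 𝔏_N^{N+1}(x,y) = (𝔥_N(y)/𝔥_{N+1}(x)) ∏ λ(y_i)⁻¹ 1(y ≺ x). -/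
noncomputable def frakL (lam : ℕ → ℝ) (N : ℕ) (x : Fin (N + 1) → ℕ) (y : Fin N → ℕ) : ℝ :=
  (hfun lam N y / hfun lam (N + 1) x) * (∏ i, (lam (y i))⁻¹) *
    (if Interlace y x then 1 else 0)

/-!
Write `p_x` for `pF lam x`, so that `ψ_y = 1 / p_{y+1}`. The tails
`∑_{m ≥ n} e^{tL}(x, m) = (2πi)⁻¹ ∮ p_x(w) / p_n(w) · e^{-tw} dw / w`
come from the identity `p_n - p_{n+1} = p_n w / λ(n)`, used in the denominator; they vanish as
`n → ∞` because the contour may be enlarged until every factor `λ(k) / (λ(k) - w)` is at most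
`1/2` in modulus. The same identity in the numerator expresses differences of tails in `x`
through `e^{tL}` itself.

For a fixed `y`, the configurations `x ≻ y` form a product of intervals, so the sum of
`det (e^{tL}(x'_i, x_j))` over them is the determinant of the interval sums. Column operations
turn this matrix into the matrix of tails, whose first column is `1`; row operations followed by
expansion along that column give an `N × N` determinant of differences of tails, and expanding
it by multilinearity gives a sum over `z ≺ x'`. This is the intertwining
`𝔓^{N+1} 𝔏 = 𝔏 𝔓^N`, in which the only configuration `z ≺ Δ_{N+1}` is `Δ_N`.
-/

section Series

lemma hasSum_indicator_Ici_of_sub_succ {E : Type*} [AddCommGroup E] [TopologicalSpace E]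
    [IsTopologicalAddGroup E] {f T : ℕ → E} (hT : Summable T)
    (hf : ∀ m, T m - T (m + 1) = f m) (n : ℕ) : HasSum ((Set.Ici n).indicator f) (T n) := by
  have hshift : Summable fun m => T (m + n) := (summable_nat_add_iff n).mpr hT
  have htelescope : HasSum (fun m => f (m + n)) (T n) := by
    have h := hshift.hasSum.sub ((hasSum_nat_add_iff' 1).mpr hshift.hasSum)
    simpa [add_right_comm _ 1 n, hf] using h
  refine (Function.Injective.hasSum_iff (add_left_injective n) fun m hm => ?_).mp ?_
  · exact Set.indicator_of_notMem (fun hnm => hm ⟨m - n, Nat.sub_add_cancel hnm⟩) f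
  · simpa [Function.comp_def] using htelescope

variable {A : Type*} [NormedCommRing A] {n : ℕ} {ι : Fin n → Type*}

lemma summable_norm_prod_pi {f : ∀ j, ι j → A} (hf : ∀ j, Summable fun m => ‖f j m‖) :
    Summable fun x : ∀ j, ι j => ‖∏ j, f j (x j)‖ := by
  induction n with
  | zero => exact Summable.of_finite
  | succ n ih =>
    rw [← (Fin.consEquiv ι).summable_iff]
    simpa [Function.comp_def, Fin.prod_univ_succ, Fin.consEquiv] using
      (hf 0).mul_norm (ih fun j => hf j.succ)

variable [CompleteSpace A]

lemma hasSum_prod_pi {f : ∀ j, ι j → A} {a : Fin n → A} (hf : ∀ j, HasSum (f j) (a j))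
    (hf_norm : ∀ j, Summable fun m => ‖f j m‖) :
    HasSum (fun x : ∀ j, ι j => ∏ j, f j (x j)) (∏ j, a j) := by
  induction n with
  | zero => simp
  | succ n ih =>
    have htail := ih (fun j => hf j.succ) fun j => hf_norm j.succ
    have htail_norm := summable_norm_prod_pi (f := fun j => f j.succ) fun j => hf_norm j.succ
    have hmul := summable_mul_of_summable_norm (hf_norm 0) htail_norm
    have h := (hf 0).mul htail hmul
    rw [← (Fin.consEquiv ι).hasSum_iff]
    simpa [Function.comp_def, Fin.prod_univ_succ, Fin.consEquiv] using h

lemma hasSum_det {f : Fin n → ∀ j, ι j → A} {B : Matrix (Fin n) (Fin n) A}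
    (hf : ∀ i j, HasSum (f i j) (B i j)) (hf_norm : ∀ i j, Summable fun m => ‖f i j m‖) :
    HasSum (fun x : ∀ j, ι j => (Matrix.of fun i j => f i j (x j)).det) B.det := by
  simp_rw [Matrix.det_apply']
  exact hasSum_sum fun σ _ =>
    (hasSum_prod_pi (fun j => hf (σ j) j) fun j => hf_norm (σ j) j).mul_left _

end Series

section Determinants

variable {A : Type*} [CommRing A] {m : Type*} [Fintype m] [DecidableEq m]

lemma det_indicator {ι : Type*} (s : m → Set ι) (f : m → ι → A) (x : m → ι) :
    (Matrix.of fun i j => (s j).indicator (f i) (x j)).det =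
      (Set.univ.pi s).indicator (fun x => (Matrix.of fun i j => f i (x j)).det) x := by
  by_cases hx : x ∈ Set.univ.pi s
  · rw [Set.indicator_of_mem hx]
    congr! 4 with i j
    exact Set.indicator_of_mem (hx j (Set.mem_univ j)) _
  · rw [Set.indicator_of_notMem hx]
    simp only [Set.mem_univ_pi, not_forall] at hx
    obtain ⟨j, hj⟩ := hx
    exact Matrix.det_eq_zero_of_column_eq_zero j fun i => Set.indicator_of_notMem hj _

lemma det_sum_rows {κ : Type*} (s : m → Finset κ) (g : κ → m → A) :
    (Matrix.of fun i j => ∑ k ∈ s i, g k j).det =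
      ∑ z ∈ Fintype.piFinset s, (Matrix.of fun i j => g (z i) j).det :=
  (congrArg Matrix.det (Matrix.ext fun i j => by simp)).trans
    (Matrix.detRowAlternating.toMultilinearMap.map_sum_finset (fun _ => g) s)

lemma det_div_mul {K : Type*} [Field K] (u v : m → K) (B : Matrix m m K) :
    (Matrix.of fun i j => v j / u i * B i j).det = (∏ j, v j) / (∏ i, u i) * B.det := by
  have h : (Matrix.of fun i j => v j / u i * B i j) =
      Matrix.of fun i j => v j * Matrix.of (fun i j => (u i)⁻¹ * B i j) i j := by
    ext i j
    simp only [Matrix.of_apply]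
    ring
  rw [h, Matrix.det_mul_row, Matrix.det_mul_column, prod_inv_distrib]
  ring

variable {n : ℕ}

lemma det_sub_snoc_succ (C : Matrix (Fin (n + 1)) (Fin (n + 1)) A) :
    (Matrix.of fun i j =>
      C i j - (Fin.snoc (fun k => C i k.succ) 0 : Fin (n + 1) → A) j).det = C.det := by
  -- Reversing the order of the columns makes each of them a combination of its predecessors.
  rw [← Matrix.det_submatrix_equiv_self Fin.revPerm,
    ← Matrix.det_submatrix_equiv_self Fin.revPerm C]
  symm
  apply Matrix.det_eq_of_forall_col_eq_smul_add_pred fun _ => 1 <;>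
    simp [Fin.rev_succ, Fin.rev_castSucc]

lemma det_cons_one (F : Fin (n + 1) → Fin n → A) :
    (Matrix.of fun i => (Fin.cons 1 (F i) : Fin (n + 1) → A)).det =
      (Matrix.of fun i j => F i.succ j - F i.castSucc j).det := by
  let B : Matrix (Fin (n + 1)) (Fin (n + 1)) A := Matrix.of <|
    Fin.cons (Fin.cons 1 (F 0)) fun i => Fin.cons 0 fun j => F i.succ j - F i.castSucc j
  trans B.det
  · refine Matrix.det_eq_of_forall_row_eq_smul_add_pred (fun _ => 1) (fun j => rfl) fun i j => ?_
    cases j using Fin.cases <;> simp [B]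
  · rw [Matrix.det_succ_column_zero, Fin.sum_univ_succ]
    simp [B, Matrix.submatrix]

end Determinants

section Interlacing

variable {N : ℕ} {y : Fin N → ℕ} {x : Fin (N + 1) → ℕ}

lemma Interlace.strictMono (h : Interlace y x) : StrictMono x :=
  Fin.strictMono_iff_lt_succ.mpr fun i => (h i).1.trans_lt (h i).2

lemma Interlace.strictMono_left (h : Interlace y x) : StrictMono y := fun i j hij =>
  (h i).2.trans_le <| (h.strictMono.monotone (Fin.succ_le_castSucc_iff.mpr hij)).trans (h j).1

/-- The finite set of all `y` with `y ≺ x`. -/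
def interlacing (x : Fin (N + 1) → ℕ) : Finset (Fin N → ℕ) :=
  Fintype.piFinset fun i => Ico (x i.castSucc) (x i.succ)

lemma mem_interlacing : y ∈ interlacing x ↔ Interlace y x := by
  simp [interlacing, Interlace]

lemma interlacing_val : interlacing (Fin.val : Fin (N + 1) → ℕ) = {Fin.val} := by
  simp [interlacing, Fintype.piFinset_singleton]

/-- The least value `x j` can take when `y ≺ x`: `0` for the first coordinate, `y (j - 1) + 1` for
the later ones. -/
def interlaceLower (y : Fin N → ℕ) : Fin (N + 1) → ℕ :=
  Fin.cons 0 fun k => y k + 1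

lemma interlaceLower_castSucc_le (hy : Monotone y) (k : Fin N) :
    interlaceLower y k.castSucc ≤ interlaceLower y k.succ := by
  obtain _ | N := N
  · exact k.elim0
  · cases k using Fin.cases with
    | zero => simp [interlaceLower]
    | succ k => simpa [interlaceLower, ← Fin.succ_castSucc] using hy k.castSucc_lt_succ.le

/-- The interval in which `x j` ranges when `y ≺ x`, encoded as a difference of two rays, the second
of which is empty for the last `j`. -/
def interlaceCell (y : Fin N → ℕ) (j : Fin (N + 1)) : Set ℕ :=
  Set.Ici (interlaceLower y j) \
    (Fin.snoc (fun k => Set.Ici (interlaceLower y k.succ)) ∅ : Fin (N + 1) → Set ℕ) j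

lemma setOf_interlace (y : Fin N → ℕ) : {x | Interlace y x} = Set.univ.pi (interlaceCell y) := by
  ext x
  have hlower : (∀ j, interlaceLower y j ≤ x j) ↔ ∀ k : Fin N, y k < x k.succ := by
    simp [Fin.forall_fin_succ, interlaceLower]
  have hupper : (∀ j : Fin (N + 1), x j ∉ (Fin.snoc (fun k => Set.Ici (interlaceLower y k.succ)) ∅ :
      Fin (N + 1) → Set ℕ) j) ↔ ∀ k : Fin N, x k.castSucc ≤ y k := by
    simp [Fin.forall_fin_succ', interlaceLower]
  simp only [Interlace, interlaceCell, Set.mem_ofPred_eq, Set.mem_univ_pi, Set.mem_sdiff,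
    Set.mem_Ici, forall_and, hlower, hupper, and_comm]

lemma hasSum_indicator_interlaceCell {E : Type*} [AddCommGroup E] [TopologicalSpace E]
    [IsTopologicalAddGroup E] (hy : Monotone y) {f T : ℕ → E}
    (hT : ∀ n, HasSum ((Set.Ici n).indicator f) (T n)) (j : Fin (N + 1)) :
    HasSum ((interlaceCell y j).indicator f) (T (interlaceLower y j) -
      (Fin.snoc (fun k => T (interlaceLower y k.succ)) 0 : Fin (N + 1) → E) j) := by
  cases j using Fin.lastCases with
  | last => simpa [interlaceCell] using hT _
  | cast k =>
    have hsub := Set.Ici_subset_Ici.mpr (interlaceLower_castSucc_le hy k)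
    rw [interlaceCell, Fin.snoc_castSucc, Fin.snoc_castSucc, Set.indicator_sdiff hsub]
    exact (hT _).sub (hT _)

theorem hasSum_indicator_interlace_det {A : Type*} [NormedCommRing A] [CompleteSpace A]
    (hy : Monotone y) {f T : Fin (N + 1) → ℕ → A}
    (hT : ∀ i n, HasSum ((Set.Ici n).indicator (f i)) (T i n))
    (hf_norm : ∀ i, Summable fun m => ‖f i m‖) :
    HasSum ({x | Interlace y x}.indicator fun x => (Matrix.of fun i j => f i (x j)).det)
      (Matrix.of fun i j => T i (interlaceLower y j)).det := by
  have hcell_norm (i j) : Summable fun m => ‖(interlaceCell y j).indicator (f i) m‖ := by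
    simpa only [norm_indicator_eq_indicator_norm] using (hf_norm i).indicator _
  rw [setOf_interlace]
  convert hasSum_det (fun i j => hasSum_indicator_interlaceCell hy (hT i) j) hcell_norm using 1
  · exact funext fun x => (det_indicator _ _ x).symm
  · exact (det_sub_snoc_succ _).symm

end Interlacing

section Contour

variable {lam : ℕ → ℝ} {R : ℝ} {w : ℂ}

lemma psiF_eq_inv_pF (lam : ℕ → ℝ) (x : ℕ) (w : ℂ) : psiF lam x w = (pF lam (x + 1) w)⁻¹ := by
  simp [psiF, pF]

@[fun_prop]
lemma differentiable_pF (lam : ℕ → ℝ) (x : ℕ) : Differentiable ℂ (pF lam x) := by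
  unfold pF
  fun_prop

lemma norm_inv_pF_le (hw : ∀ k, 3 * |lam k| ≤ ‖w‖) (n : ℕ) :
    ‖(pF lam n w)⁻¹‖ ≤ (1 / 2) ^ n := by
  have hfactor (k : ℕ) : ‖((lam k - w) / lam k : ℂ)⁻¹‖ ≤ 1 / 2 := by
    have hnorm : ‖(lam k : ℂ)‖ = |lam k| := Complex.norm_real _
    have hdist : ‖w‖ - ‖(lam k : ℂ)‖ ≤ ‖(lam k : ℂ) - w‖ := by
      rw [norm_sub_rev]
      exact norm_sub_norm_le _ _
    rw [inv_div, norm_div]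
    refine div_le_of_le_mul₀ (norm_nonneg _) (by norm_num) ?_
    linarith [hw k]
  rw [pF, ← prod_inv_distrib, norm_prod]
  simpa using prod_le_prod (s := range n) (fun _ _ => norm_nonneg _) fun k _ => hfactor k

/-- The integrand of `eLTail`. -/
noncomputable def tailKernel (lam : ℕ → ℝ) (t : ℝ) (x n : ℕ) (w : ℂ) : ℂ :=
  pF lam x w / pF lam n w * Complex.exp (-(t : ℂ) * w) * w⁻¹

/-- The tail `∑_{m ≥ n} e^{tL}(x, m)`, defined by its contour integral;
`hasSum_indicator_Ici_eL` identifies the two. -/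
noncomputable def eLTail (lam : ℕ → ℝ) (R t : ℝ) (x n : ℕ) : ℂ :=
  (2 * (Real.pi : ℂ) * Complex.I)⁻¹ * ∮ w in C(0, R), tailKernel lam t x n w

variable (hlam : ∀ k, lam k ≠ 0)
include hlam

lemma pF_succ (x : ℕ) (w : ℂ) : pF lam (x + 1) w = pF lam x w * (1 - w / lam x) := by
  have hx : (lam x : ℂ) ≠ 0 := ofReal_ne_zero.mpr (hlam x)
  rw [pF, prod_range_succ, sub_div, div_self hx, pF]

lemma pF_zero_right (x : ℕ) : pF lam x 0 = 1 := by
  simp [pF, hlam]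

lemma pF_ne_zero (hw : ∀ k, |lam k| < ‖w‖) (n : ℕ) : pF lam n w ≠ 0 := by
  refine prod_ne_zero_iff.mpr fun k _ => div_ne_zero (fun h => (hw k).ne ?_)
    (ofReal_ne_zero.mpr (hlam k))
  rw [← sub_eq_zero.mp h, Complex.norm_real, Real.norm_eq_abs]

lemma tailKernel_sub_succ_right (hw : ∀ k, |lam k| < ‖w‖) (t : ℝ) (x n : ℕ) :
    tailKernel lam t x n w - tailKernel lam t x (n + 1) w =
      -(1 / (lam n : ℂ)) * (psiF lam n w * pF lam x w * Complex.exp (-(t : ℂ) * w)) := by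
  have hw0 : w ≠ 0 := norm_pos_iff.mp ((abs_nonneg _).trans_lt (hw 0))
  have hn : (lam n : ℂ) ≠ 0 := ofReal_ne_zero.mpr (hlam n)
  have hp := pF_ne_zero hlam hw n
  have hp_succ := pF_ne_zero hlam hw (n + 1)
  have hstep := pF_succ hlam n w
  rw [tailKernel, tailKernel, psiF_eq_inv_pF]
  field_simp at hstep ⊢
  linear_combination pF lam x w * hstep

lemma tailKernel_sub_succ_left (hw : ∀ k, |lam k| < ‖w‖) (t : ℝ) (x n : ℕ) :
    tailKernel lam t (x + 1) (n + 1) w - tailKernel lam t x (n + 1) w =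
      lam n / lam x * (tailKernel lam t x n w - tailKernel lam t x (n + 1) w) := by
  have hn : (lam n : ℂ) ≠ 0 := ofReal_ne_zero.mpr (hlam n)
  have hw0 : w ≠ 0 := norm_pos_iff.mp ((abs_nonneg _).trans_lt (hw 0))
  rw [tailKernel_sub_succ_right hlam hw, psiF_eq_inv_pF, tailKernel, tailKernel, pF_succ hlam x]
  field_simp
  ring

lemma differentiableAt_tailKernel (hw : ∀ k, |lam k| < ‖w‖) (t : ℝ) (x n : ℕ) :
    DifferentiableAt ℂ (tailKernel lam t x n) w := by
  have hw0 : w ≠ 0 := norm_pos_iff.mp ((abs_nonneg _).trans_lt (hw 0))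
  have hp := pF_ne_zero hlam hw n
  unfold tailKernel
  fun_prop (disch := assumption)

variable (hR : ∀ k, |lam k| < R)
include hR

lemma circleIntegrable_tailKernel (t : ℝ) (x n : ℕ) :
    CircleIntegrable (tailKernel lam t x n) 0 R := by
  refine ContinuousOn.circleIntegrable ((abs_nonneg _).trans (hR 0).le) fun w hw => ?_
  have hw_norm : ‖w‖ = R := mem_sphere_zero_iff_norm.mp hw
  exact (differentiableAt_tailKernel hlam (hw_norm ▸ hR) t x n).continuousAt.continuousWithinAt

lemma eLTail_sub_eq_of_tailKernel_sub_eq {t : ℝ} {x x' n n' : ℕ} {g : ℂ → ℂ}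
    (hg : ∀ w, ‖w‖ = R → tailKernel lam t x n w - tailKernel lam t x' n' w = g w) :
    eLTail lam R t x n - eLTail lam R t x' n' =
      (2 * (Real.pi : ℂ) * Complex.I)⁻¹ * ∮ w in C(0, R), g w := by
  rw [eLTail, eLTail, ← mul_sub, ← circleIntegral.integral_sub
    (circleIntegrable_tailKernel hlam hR t x n) (circleIntegrable_tailKernel hlam hR t x' n')]
  congr 1
  exact circleIntegral.integral_congr ((abs_nonneg _).trans (hR 0).le)
    fun w hw => hg w (mem_sphere_zero_iff_norm.mp hw)

lemma eLTail_sub_succ_right (t : ℝ) (x n : ℕ) :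
    eLTail lam R t x n - eLTail lam R t x (n + 1) = eL lam R t x n := by
  rw [eLTail_sub_eq_of_tailKernel_sub_eq hlam hR fun w hw =>
    tailKernel_sub_succ_right hlam (hw ▸ hR) t x n, circleIntegral.integral_const_mul, eL]
  ring

lemma eLTail_sub_succ_left (t : ℝ) (x n : ℕ) :
    eLTail lam R t (x + 1) (n + 1) - eLTail lam R t x (n + 1) =
      lam n / lam x * eL lam R t x n := by
  rw [eLTail_sub_eq_of_tailKernel_sub_eq hlam hR fun w hw =>
    tailKernel_sub_succ_left hlam (hw ▸ hR) t x n, circleIntegral.integral_const_mul,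
    mul_left_comm, ← eLTail_sub_eq_of_tailKernel_sub_eq hlam hR fun w _ => rfl,
    eLTail_sub_succ_right hlam hR]

lemma eLTail_sub_eq_sum_Ico (t : ℝ) (n : ℕ) {a b : ℕ} (hab : a ≤ b) :
    eLTail lam R t b (n + 1) - eLTail lam R t a (n + 1) =
      ∑ z ∈ Ico a b, lam n / lam z * eL lam R t z n := by
  simp_rw [← eLTail_sub_succ_left hlam hR]
  exact (sum_Ico_sub (fun z => eLTail lam R t z (n + 1)) hab).symm

lemma eLTail_zero (t : ℝ) (x : ℕ) : eLTail lam R t x 0 = 1 := by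
  have hd : Differentiable ℂ fun w : ℂ => pF lam x w * Complex.exp (-(t : ℂ) * w) := by
    fun_prop
  have hcauchy := hd.diffContOnCl.two_pi_i_inv_smul_circleIntegral_sub_inv_smul
    (Metric.mem_ball_self (x := (0 : ℂ)) ((abs_nonneg _).trans_lt (hR 0)))
  have hp_zero (w : ℂ) : pF lam 0 w = 1 := prod_range_zero _
  simpa [eLTail, tailKernel, pF_zero_right hlam, hp_zero, mul_comm] using hcauchy

lemma eLTail_eq_of_le {R' : ℝ} (hRR' : R ≤ R') (t : ℝ) (x n : ℕ) :
    eLTail lam R t x n = eLTail lam R' t x n := by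
  have hd (w : ℂ) (hw : R ≤ ‖w‖) : DifferentiableAt ℂ (tailKernel lam t x n) w :=
    differentiableAt_tailKernel hlam (fun k => (hR k).trans_le hw) t x n
  rw [eLTail, eLTail, Complex.circleIntegral_eq_of_differentiable_on_annulus_off_countable
    ((abs_nonneg _).trans_lt (hR 0)) hRR' Set.countable_empty]
  · exact fun w hw => (hd w (by simpa using hw.2)).continuousAt.continuousWithinAt
  · exact fun w hw => hd w (le_of_lt (by simpa using hw.1.2))

lemma exists_norm_eLTail_le (t : ℝ) (x : ℕ) :
    ∃ C : ℝ, ∀ n, ‖eLTail lam R t x n‖ ≤ C * (1 / 2) ^ n := by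
  have hR0 : 0 < R := (abs_nonneg _).trans_lt (hR 0)
  have hcont : ContinuousOn (fun w : ℂ => pF lam x w * Complex.exp (-(t : ℂ) * w) * w⁻¹)
      (Metric.sphere 0 (3 * R)) := by
    refine (Continuous.continuousOn ?_).mul (continuousOn_inv₀.mono fun w hw => ?_)
    · exact (differentiable_pF lam x).continuous.mul (by fun_prop)
    · exact ne_zero_of_mem_sphere (by positivity) ⟨w, hw⟩
  obtain ⟨C, hC⟩ := (isCompact_sphere (0 : ℂ) (3 * R)).exists_bound_of_continuousOn hcont
  refine ⟨3 * R * C, fun n => ?_⟩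
  rw [eLTail_eq_of_le hlam hR (by linarith : R ≤ 3 * R), mul_assoc]
  refine circleIntegral.norm_two_pi_i_inv_smul_integral_le_of_norm_le_const (by positivity)
    fun w hw => ?_
  have hw_norm : ‖w‖ = 3 * R := mem_sphere_zero_iff_norm.mp hw
  have hinv : ‖(pF lam n w)⁻¹‖ ≤ (1 / 2) ^ n :=
    norm_inv_pF_le (fun k => by linarith [hR k]) n
  calc ‖tailKernel lam t x n w‖
      = ‖pF lam x w * Complex.exp (-(t : ℂ) * w) * w⁻¹‖ * ‖(pF lam n w)⁻¹‖ := by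
        rw [← norm_mul, tailKernel]
        ring_nf
    _ ≤ C * (1 / 2) ^ n :=
        mul_le_mul (hC w hw) hinv (norm_nonneg _) ((norm_nonneg _).trans (hC w hw))

lemma summable_norm_eLTail (t : ℝ) (x : ℕ) : Summable fun n => ‖eLTail lam R t x n‖ := by
  obtain ⟨C, hC⟩ := exists_norm_eLTail_le hlam hR t x
  exact .of_nonneg_of_le (fun _ => norm_nonneg _) hC (summable_geometric_two.mul_left C)

lemma hasSum_indicator_Ici_eL (t : ℝ) (x n : ℕ) :
    HasSum ((Set.Ici n).indicator (eL lam R t x)) (eLTail lam R t x n) :=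
  hasSum_indicator_Ici_of_sub_succ (summable_norm_eLTail hlam hR t x).of_norm
    (eLTail_sub_succ_right hlam hR t x) n

lemma summable_eL (t : ℝ) (x : ℕ) : Summable (eL lam R t x) := by
  simpa using (hasSum_indicator_Ici_eL hlam hR t x 0).summable

end Contour

section Intertwining

variable {lam : ℕ → ℝ} {N : ℕ}

theorem hasSum_indicator_interlace_det_eL (hlam : ∀ k, lam k ≠ 0) {R : ℝ} (hR : ∀ k, |lam k| < R)
    (t : ℝ) {x' : Fin (N + 1) → ℕ} (hx' : Monotone x') {y : Fin N → ℕ} (hy : Monotone y) :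
    HasSum ({x | Interlace y x}.indicator fun x =>
        (Matrix.of fun i j => eL lam R t (x' i) (x j)).det)
      (∑ z ∈ interlacing x', (∏ j, (lam (y j) : ℂ)) / (∏ i, (lam (z i) : ℂ)) *
        (Matrix.of fun i j => eL lam R t (z i) (y j)).det) := by
  have hsum := hasSum_indicator_interlace_det hy
    (fun i => hasSum_indicator_Ici_eL hlam hR t (x' i)) fun i => (summable_eL hlam hR t (x' i)).norm
  have htails : (Matrix.of fun i j => eLTail lam R t (x' i) (interlaceLower y j)) =
      Matrix.of fun i => (Fin.cons 1 fun k => eLTail lam R t (x' i) (y k + 1) :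
        Fin (N + 1) → ℂ) := by
    ext i j
    cases j using Fin.cases <;> simp [interlaceLower, eLTail_zero hlam hR]
  have hdiff (i j : Fin N) :
      eLTail lam R t (x' i.succ) (y j + 1) - eLTail lam R t (x' i.castSucc) (y j + 1) =
        ∑ z ∈ Ico (x' i.castSucc) (x' i.succ), lam (y j) / lam z * eL lam R t z (y j) :=
    eLTail_sub_eq_sum_Ico hlam hR t (y j) (hx' i.castSucc_lt_succ.le)
  rw [htails, det_cons_one] at hsum
  simp_rw [hdiff] at hsum
  rw [det_sum_rows] at hsum
  simpa only [interlacing, ← det_div_mul, Matrix.of_apply] using hsum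

lemma hfun_succ (lam : ℕ → ℝ) (x : Fin (N + 1) → ℕ) :
    hfun lam (N + 1) x = ∑ y ∈ interlacing x, (∏ i, (lam (y i))⁻¹) * hfun lam N y := by
  rw [hfun, ← Finset.tsum_subtype]
  exact ((Equiv.subtypeEquivRight fun y => mem_interlacing).tsum_eq
    fun y : {y // Interlace y x} => (∏ i, (lam (y.1 i))⁻¹) * hfun lam N y.1).symm

lemma hfun_pos (hlam : ∀ k, 0 < lam k) {x : Fin N → ℕ} (hx : StrictMono x) :
    0 < hfun lam N x := by
  induction N with
  | zero => simp [hfun]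
  | succ N ih =>
    rw [hfun_succ]
    refine sum_pos (fun y hy => ?_) ⟨fun i => x i.castSucc, mem_interlacing.mpr fun i =>
      ⟨le_rfl, hx i.castSucc_lt_succ⟩⟩
    exact mul_pos (prod_pos fun i _ => inv_pos.mpr (hlam _))
      (ih (mem_interlacing.mp hy).strictMono_left)

lemma sum_interlacing_frakL {x : Fin (N + 1) → ℕ} (hx : hfun lam (N + 1) x ≠ 0) :
    ∑ y ∈ interlacing x, frakL lam N x y = 1 := by
  calc ∑ y ∈ interlacing x, frakL lam N x y
      = ∑ y ∈ interlacing x, (∏ i, (lam (y i))⁻¹) * hfun lam N y / hfun lam (N + 1) x := by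
        refine sum_congr rfl fun y hy => ?_
        rw [frakL, if_pos (mem_interlacing.mp hy)]
        ring
    _ = 1 := by rw [← sum_div, ← hfun_succ, div_self hx]

lemma frakL_val (hlam : ∀ k, 0 < lam k) (N : ℕ) : frakL lam N Fin.val Fin.val = 1 := by
  simpa [interlacing_val] using
    sum_interlacing_frakL (hfun_pos hlam (Fin.val_strictMono (n := N + 1))).ne'

/-- The factor common to all terms on both sides of the intertwining
`𝔓^{N+1} 𝔏 (x', y) = 𝔏 𝔓^N (x', y)`. -/
noncomputable def intertwiningFactor (lam : ℕ → ℝ) (x' : Fin (N + 1) → ℕ) (y : Fin N → ℕ) : ℂ :=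
  hfun lam N y / hfun lam (N + 1) x' * (∏ j, (lam (y j) : ℂ))⁻¹

lemma frakP_mul_frakL (R t : ℝ) (x' : Fin (N + 1) → ℕ) {x : Fin (N + 1) → ℕ}
    (hx : hfun lam (N + 1) x ≠ 0) (y : Fin N → ℕ) :
    frakP lam R t (N + 1) x' x * (frakL lam N x y : ℂ) = intertwiningFactor lam x' y *
      {x | Interlace y x}.indicator
        (fun x => (Matrix.of fun i j => eL lam R t (x' i) (x j)).det) x := by
  have hx_coe : (hfun lam (N + 1) x : ℂ) ≠ 0 := ofReal_ne_zero.mpr hx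
  by_cases hyx : Interlace y x
  · rw [Set.indicator_of_mem (by exact hyx), frakP, frakL, if_pos hyx, intertwiningFactor]
    push_cast
    rw [prod_inv_distrib]
    field_simp
  · simp [frakL, hyx]

lemma frakL_mul_frakP (R t : ℝ) {x' : Fin (N + 1) → ℕ} {z : Fin N → ℕ} (hzx' : Interlace z x')
    (hz : hfun lam N z ≠ 0) {y : Fin N → ℕ} (hy : ∀ j, lam (y j) ≠ 0) :
    (frakL lam N x' z : ℂ) * frakP lam R t N z y = intertwiningFactor lam x' y *
      ((∏ j, (lam (y j) : ℂ)) / (∏ i, (lam (z i) : ℂ)) *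
        (Matrix.of fun i j => eL lam R t (z i) (y j)).det) := by
  have hz_coe : (hfun lam N z : ℂ) ≠ 0 := ofReal_ne_zero.mpr hz
  have hy_prod : ∏ j, (lam (y j) : ℂ) ≠ 0 :=
    prod_ne_zero_iff.mpr fun j _ => ofReal_ne_zero.mpr (hy j)
  rw [frakL, if_pos hzx', frakP, intertwiningFactor]
  push_cast
  rw [prod_inv_distrib]
  field_simp

end Intertwining

theorem stmt_12_general {lam : ℕ → ℝ} (hlam : ∀ k, 0 < lam k) {R : ℝ} (hR : ∀ k, lam k < R)
    (t : ℝ) {N : ℕ} {x' : Fin (N + 1) → ℕ} (hx' : StrictMono x')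
    {y : Fin N → ℕ} (hy : StrictMono y) :
    HasSum (fun x : { x : Fin (N + 1) → ℕ // StrictMono x } =>
        frakP lam R t (N + 1) x' x.1 * (frakL lam N x.1 y : ℂ))
      (∑ z ∈ interlacing x', (frakL lam N x' z : ℂ) * frakP lam R t N z y) := by
  have hlam0 (k : ℕ) : lam k ≠ 0 := (hlam k).ne'
  have hR_abs (k : ℕ) : |lam k| < R := by rw [abs_of_pos (hlam k)]; exact hR k
  have hdet := (hasSum_indicator_interlace_det_eL hlam0 hR_abs t hx'.monotone hy.monotone).mul_left
    (intertwiningFactor lam x' y)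
  rw [mul_sum, sum_congr rfl fun z hz => (frakL_mul_frakP R t (mem_interlacing.mp hz)
    (hfun_pos hlam (mem_interlacing.mp hz).strictMono_left).ne' fun j => hlam0 (y j)).symm] at hdet
  simp_rw [frakP_mul_frakL R t x' (hfun_pos hlam (Subtype.prop _)).ne' y]
  refine (hasSum_subtype_iff_of_support_subset fun x hx => ?_).mpr hdet
  exact Interlace.strictMono (Set.mem_of_indicator_ne_zero (right_ne_zero_of_mul hx))

/-- the inhomogeneous Plancherel measures are consistent with the links
of the inhomogeneous Gelfand–Tsetlin graph: with Δ_N = (0,1,…,N−1),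
Σ_{x ∈ W^{N+1}} 𝔓_γ^{N+1}(Δ_{N+1}, x) 𝔏_N^{N+1}(x,y) = 𝔓_γ^N(Δ_N, y),
the series converging absolutely. -/
theorem stmt_12 (lam : ℕ → ℝ) (s M : ℝ) (hs : 0 < s)
    (hlb : ∀ x, s ≤ lam x) (hub : ∀ x, lam x ≤ M)
    (R : ℝ) (hR : M < R) (γ : ℝ) (hγ : 0 ≤ γ) (N : ℕ) (hN : 1 ≤ N)
    (y : Fin N → ℕ) (hy : StrictMono y) :
    HasSum (fun x : { x : Fin (N + 1) → ℕ // StrictMono x } =>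
        frakP lam R γ (N + 1) (fun i => (i : ℕ)) x.1 * ((frakL lam N x.1 y : ℝ) : ℂ))
      (frakP lam R γ N (fun i => (i : ℕ)) y) ∧
    Summable (fun x : { x : Fin (N + 1) → ℕ // StrictMono x } =>
        ‖frakP lam R γ (N + 1) (fun i => (i : ℕ)) x.1 * ((frakL lam N x.1 y : ℝ) : ℂ)‖) := by
  have hlam (k : ℕ) : 0 < lam k := hs.trans_le (hlb k)
  have h := stmt_12_general hlam (fun k => (hub k).trans_lt hR) γ Fin.val_strictMono hy
  rw [interlacing_val, sum_singleton, frakL_val hlam, ofReal_one, one_mul] at h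
  exact ⟨h, h.summable.norm⟩
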